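/- Consider f : ℝ² → ℝ given by f(x, y) = (1/3)x³ + (1/2)y², with gradient-descent map g(x, y) = (x − γx², y − γy) for a step size γ ∈ (0, 1). For every initial condition (x₀, y₀) with 0 < x₀ < 1/γ and y₀ ∈ ℝ, the iterate sequence (gᵏ(x₀, y₀))_{k∈ℕ} converges to the non-strict saddle point (0, 0). In particular, the set of initial conditions from which gradient descent converges to (0,0) contains the open set (0, 1/γ) × ℝ and therefore has strictly positive (indeed infinite) Lebesgue measure. -/

import Mathlib

/-!
The gradient of `f` is `(x², y)`, so gradient descent decouples: the second coordinate is
multiplied by `1 - γ ∈ (0, 1)` at each step, and the first follows `x ↦ x - γx²`. That map sends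
`(0, 1/γ)` into itself and decreases every point of it, so its orbits converge, and the limit is a
fixed point of a continuous map whose only fixed point is `0`. The strip `(0, 1/γ) × ℝ` is open
and nonempty, hence has positive Lebesgue measure.
-/

open MeasureTheory Filter Topology
open scoped RealInnerProductSpace

/-- The function `f(x, y) = (1/3)x³ + (1/2)y²` on `ℝ²`. -/
noncomputable def fEx15 : EuclideanSpace ℝ (Fin 2) → ℝ :=
  fun p => (p 0) ^ 3 / 3 + (p 1) ^ 2 / 2

/-- The gradient-descent map `g(p) = p − γ∇f(p)` for `fEx15`; explicitly,
`g(x, y) = (x − γx², y − γy)`. -/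
noncomputable def gEx15 (γ : ℝ) : EuclideanSpace ℝ (Fin 2) → EuclideanSpace ℝ (Fin 2) :=
  fun p => p - γ • gradient fEx15 p

lemma hasGradientAt_fEx15 (p : EuclideanSpace ℝ (Fin 2)) :
    HasGradientAt fEx15 !₂[(p 0) ^ 2, p 1] p := by
  rw [hasGradientAt_iff_hasFDerivAt]
  have h0 : HasFDerivAt (fun q : EuclideanSpace ℝ (Fin 2) => q 0)
      (EuclideanSpace.proj 0 : EuclideanSpace ℝ (Fin 2) →L[ℝ] ℝ) p :=
    (EuclideanSpace.proj 0 : EuclideanSpace ℝ (Fin 2) →L[ℝ] ℝ).hasFDerivAt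
  have h1 : HasFDerivAt (fun q : EuclideanSpace ℝ (Fin 2) => q 1)
      (EuclideanSpace.proj 1 : EuclideanSpace ℝ (Fin 2) →L[ℝ] ℝ) p :=
    (EuclideanSpace.proj 1 : EuclideanSpace ℝ (Fin 2) →L[ℝ] ℝ).hasFDerivAt
  have h := ((h0.pow 3).mul_const (3⁻¹ : ℝ)).add ((h1.pow 2).mul_const (2⁻¹ : ℝ))
  refine (h.congr_fderiv ?_).congr_of_eventuallyEq (Eventually.of_forall fun q => ?_)
  · ext v
    simp [PiLp.inner_apply, Fin.sum_univ_two]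
    ring
  · simp [fEx15, div_eq_mul_inv]

lemma gradient_fEx15 (p : EuclideanSpace ℝ (Fin 2)) :
    gradient fEx15 p = !₂[(p 0) ^ 2, p 1] :=
  (hasGradientAt_fEx15 p).gradient

lemma gEx15_iterate_zero (γ : ℝ) (p : EuclideanSpace ℝ (Fin 2)) (k : ℕ) :
    ((gEx15 γ)^[k] p) 0 = (fun x : ℝ => x - γ * x ^ 2)^[k] (p 0) := by
  induction k with
  | zero => rfl
  | succ k ih =>
    rw [Function.iterate_succ_apply', Function.iterate_succ_apply', ← ih]
    simp [gEx15, gradient_fEx15]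

lemma gEx15_iterate_one (γ : ℝ) (p : EuclideanSpace ℝ (Fin 2)) (k : ℕ) :
    ((gEx15 γ)^[k] p) 1 = (1 - γ) ^ k * p 1 := by
  induction k with
  | zero => simp
  | succ k ih =>
    have h : ((gEx15 γ)^[k + 1] p) 1 = (1 - γ) * ((gEx15 γ)^[k] p) 1 := by
      rw [Function.iterate_succ_apply']
      simp [gEx15, gradient_fEx15]
      ring
    rw [h, ih]
    ring

/-- An orbit of `x ↦ x - γx²` started in `(0, 1/γ)` is decreasing and bounded below, so it
converges to a fixed point, and `0` is the only one. -/
lemma tendsto_iterate_sub_sq {γ x : ℝ} (hγ : 0 < γ) (hx : 0 < x) (hx' : γ * x < 1) :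
    Tendsto (fun k => (fun x : ℝ => x - γ * x ^ 2)^[k] x) atTop (𝓝 0) := by
  have hmem : ∀ k, 0 < (fun x : ℝ => x - γ * x ^ 2)^[k] x ∧
      γ * (fun x : ℝ => x - γ * x ^ 2)^[k] x < 1 := by
    intro k
    induction k with
    | zero => exact ⟨hx, hx'⟩
    | succ k ih =>
      rw [Function.iterate_succ_apply']
      obtain ⟨h1, h2⟩ := ih
      generalize (fun x : ℝ => x - γ * x ^ 2)^[k] x = z at h1 h2
      exact ⟨by nlinarith, by nlinarith [sq_nonneg (γ * z)]⟩
  have hanti : Antitone (fun k => (fun x : ℝ => x - γ * x ^ 2)^[k] x) := by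
    refine antitone_nat_of_succ_le fun k => ?_
    rw [Function.iterate_succ_apply']
    exact sub_le_self _ (by positivity)
  have hlim := tendsto_atTop_ciInf hanti ⟨0, by rintro _ ⟨k, rfl⟩; exact (hmem k).1.le⟩
  have hfix := isFixedPt_of_tendsto_iterate hlim (by fun_prop)
  have h0 : (⨅ k, (fun x : ℝ => x - γ * x ^ 2)^[k] x) = 0 := by
    simpa [Function.IsFixedPt, hγ.ne'] using hfix
  rwa [h0] at hlim

lemma tendsto_gEx15_iterate {γ : ℝ} (hγ : γ ∈ Set.Ioo (0 : ℝ) 1)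
    (p : EuclideanSpace ℝ (Fin 2)) (h0 : 0 < p 0) (h1 : p 0 < 1 / γ) :
    Tendsto (fun k => (gEx15 γ)^[k] p) atTop (𝓝 0) := by
  rw [(PiLp.homeomorph 2 (fun _ : Fin 2 => ℝ)).isInducing.tendsto_nhds_iff, tendsto_pi_nhds]
  intro i
  fin_cases i
  · have h1' : γ * p 0 < 1 := by rwa [lt_div_iff₀ hγ.1, mul_comm] at h1
    exact (tendsto_iterate_sub_sq hγ.1 h0 h1').congr fun k => (gEx15_iterate_zero γ p k).symm
  · have h : Tendsto (fun k : ℕ => (1 - γ) ^ k * p 1) atTop (𝓝 (0 * p 1)) :=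
      (tendsto_pow_atTop_nhds_zero_of_lt_one (by linarith [hγ.2])
        (by linarith [hγ.1])).mul_const _
    rw [zero_mul] at h
    exact h.congr fun k => (gEx15_iterate_one γ p k).symm

/-- For `f(x,y) = (1/3)x³ + (1/2)y²` (whose gradient is
`(x², y)`, so the gradient-descent map is `g(x,y) = (x − γx², y − γy)`) with
step size `γ ∈ (0, 1)`: for every initial condition with `0 < x₀ < 1/γ` the
iterates of `g` converge to the non-strict saddle `(0,0)`; hence the set of
initial conditions converging to `(0,0)` contains the open set
`(0, 1/γ) × ℝ` and has strictly positive Lebesgue measure. -/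
theorem nonstrict_saddle_stable_set_positive_measure (γ : ℝ)
    (hγ : γ ∈ Set.Ioo (0 : ℝ) 1) :
    (∀ p : EuclideanSpace ℝ (Fin 2), gradient fEx15 p = ![(p 0) ^ 2, p 1]) ∧
    (∀ p : EuclideanSpace ℝ (Fin 2), 0 < p 0 → p 0 < 1 / γ →
      Tendsto (fun k => (gEx15 γ)^[k] p) atTop (𝓝 0)) ∧
    {p : EuclideanSpace ℝ (Fin 2) | 0 < p 0 ∧ p 0 < 1 / γ} ⊆
      {p : EuclideanSpace ℝ (Fin 2) | Tendsto (fun k => (gEx15 γ)^[k] p) atTop (𝓝 0)} ∧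
    0 < volume {p : EuclideanSpace ℝ (Fin 2) |
      Tendsto (fun k => (gEx15 γ)^[k] p) atTop (𝓝 0)} := by
  have hsub : {p : EuclideanSpace ℝ (Fin 2) | 0 < p 0 ∧ p 0 < 1 / γ} ⊆
      {p : EuclideanSpace ℝ (Fin 2) | Tendsto (fun k => (gEx15 γ)^[k] p) atTop (𝓝 0)} :=
    fun p hp => tendsto_gEx15_iterate hγ p hp.1 hp.2
  refine ⟨fun p => by rw [gradient_fEx15], tendsto_gEx15_iterate hγ, hsub, ?_⟩
  have hopen : IsOpen {p : EuclideanSpace ℝ (Fin 2) | 0 < p 0 ∧ p 0 < 1 / γ} :=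
    isOpen_Ioo.preimage (f := fun p : EuclideanSpace ℝ (Fin 2) => p 0) (by fun_prop)
  have hne : {p : EuclideanSpace ℝ (Fin 2) | 0 < p 0 ∧ p 0 < 1 / γ}.Nonempty := by
    obtain ⟨a, ha⟩ := exists_between (one_div_pos.mpr hγ.1)
    exact ⟨!₂[a, 0], by simpa using ha⟩
  exact (hopen.measure_pos volume hne).trans_le (measure_mono hsub)
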